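/- Let r ∈ ℚ² ∖ ℤ², let n ∈ ℤ², let A ∈ Γ_r, and let β be a real irrational number with A·β = β. If the limit L := lim_{y→0⁺} ϖ_r(A·(β+iy))/ϖ_r(β+iy) exists in ℂ, then the limit lim_{y→0⁺} ϖ_{r+n}(A·(β+iy))/ϖ_{r+n}(β+iy) also exists and equals L. (Invariance of the real multiplication value of the Shintani–Faddeev modular cocycle under integer shifts of the characteristics, in the case r ∉ ℤ².) -/

import Mathlib

/-!
Shifting `r.1` by an integer leaves `ϖ_r` unchanged, since `e` has period one. Shifting `r.2` by one
removes the first factor of the product: `ϖ_r(τ) = (1 - e(r₂τ - r₁)) ϖ_{r+(0,1)}(τ)`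
(`varpiChar_eq_mul`). The two quotients in the theorem therefore differ by the factor
`(1 - e(r₂ A·τ - r₁)) / (1 - e(r₂τ - r₁))`. As `τ → β`, also `A·τ → A·β = β`, so numerator and
denominator both tend to `1 - e(r₂β - r₁)`, which is nonzero because `β` is irrational and
`r ∉ ℤ²` (`one_sub_ee_ne_zero`). The factor tends to `1`, so one quotient tends to `L` exactly when
the other does (`tendsto_shift_iff`); induction on `n.2` in both directions finishes the proof.
-/

open Complex Filter

/-- `e(z) = exp(2πiz)`. -/
noncomputable def ee (z : ℂ) : ℂ := Complex.exp (2 * Real.pi * Complex.I * z)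

/-- The q-Pochhammer symbol with characteristics:
`ϖ_r(τ) = ∏_{k≥0} (1 − e((k+r₂)τ − r₁))`. -/
noncomputable def varpiChar (r : ℚ × ℚ) (τ : ℂ) : ℂ :=
  ∏' k : ℕ, (1 - ee (((k : ℂ) + (r.2 : ℂ)) * τ - (r.1 : ℂ)))

/-- Membership of `[[a,b],[c,d]]` in the congruence group `Γ_r`. -/
def inGamma (r : ℚ × ℚ) (a b c d : ℤ) : Prop :=
  a * d - b * c = 1 ∧ (∃ m : ℤ, (a : ℚ) * r.1 + (b : ℚ) * r.2 - r.1 = m)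
    ∧ (∃ n : ℤ, (c : ℚ) * r.1 + (d : ℚ) * r.2 - r.2 = n)

lemma ee_add (z w : ℂ) : ee (z + w) = ee z * ee w := by
  simp only [ee, mul_add, Complex.exp_add]

lemma ee_nat_mul (k : ℕ) (z : ℂ) : ee (k * z) = ee z ^ k := by
  rw [ee, ee, ← Complex.exp_nat_mul]
  ring_nf

lemma ee_sub_int (z : ℂ) (m : ℤ) : ee (z - m) = ee z := by
  rw [ee, ee, Complex.exp_eq_exp_iff_exists_int]
  exact ⟨-m, by push_cast; ring⟩

lemma continuous_ee : Continuous ee := by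
  unfold ee
  fun_prop

lemma norm_ee_lt_one {τ : ℂ} (hτ : 0 < τ.im) : ‖ee τ‖ < 1 := by
  have hre : (2 * Real.pi * Complex.I * τ).re = -(2 * Real.pi * τ.im) := by simp
  rw [ee, Complex.norm_exp, hre, Real.exp_lt_one_iff]
  have := Real.pi_pos
  have : 0 < 2 * Real.pi * τ.im := by positivity
  linarith

/-- The product defining `ϖ_{(x,s)}(τ)` converges on the upper half-plane, by comparison with the
geometric series in `e(τ)`. -/
lemma multipliable_varpi {τ : ℂ} (hτ : 0 < τ.im) (s x : ℂ) :
    Multipliable fun k : ℕ => 1 - ee (((k : ℂ) + s) * τ - x) := by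
  have hterm (k : ℕ) : ee (((k : ℂ) + s) * τ - x) = ee τ ^ k * ee (s * τ - x) := by
    rw [← ee_nat_mul, ← ee_add]
    ring_nf
  have hs : Summable fun k : ℕ => ‖-ee (((k : ℂ) + s) * τ - x)‖ := by
    simp only [hterm, norm_neg, norm_mul, norm_pow]
    exact (summable_geometric_of_lt_one (norm_nonneg _) (norm_ee_lt_one hτ)).mul_right _
  simpa only [sub_eq_add_neg] using multipliable_one_add_of_summable hs

/-- Splitting off the first factor of `ϖ_r`. -/
lemma varpiChar_eq_mul {τ : ℂ} (hτ : 0 < τ.im) (x s : ℚ) :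
    varpiChar (x, s) τ = (1 - ee (s * τ - x)) * varpiChar (x, s + 1) τ := by
  have hterm (k : ℕ) : 1 - ee ((((k + 1 : ℕ) : ℂ) + (s : ℂ)) * τ - (x : ℂ)) =
      1 - ee (((k : ℂ) + ((s + 1 : ℚ) : ℂ)) * τ - (x : ℂ)) := by
    congr 3
    push_cast
    ring
  have hm := multipliable_varpi hτ ((s + 1 : ℚ) : ℂ) (x : ℂ)
  have h := tprod_eq_zero_mul' (f := fun k : ℕ => 1 - ee (((k : ℂ) + (s : ℂ)) * τ - (x : ℂ)))
    (hm.congr fun k => (hterm k).symm)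
  unfold varpiChar
  rw [h, tprod_congr hterm, Nat.cast_zero, zero_add]

lemma varpiChar_add_int_fst (x s : ℚ) (m : ℤ) (τ : ℂ) :
    varpiChar (x + m, s) τ = varpiChar (x, s) τ := by
  simp only [varpiChar]
  congr 1
  ext k
  rw [Rat.cast_add, Rat.cast_intCast, ← sub_sub, ee_sub_int]

/-- The removed factor does not vanish at `β`: an integer value of `sβ - x` forces `s = 0`, as `β`
is irrational, and then `x` is an integer. -/
lemma one_sub_ee_ne_zero {β : ℝ} (hβ : Irrational β) {x s : ℚ}
    (hr : ¬ ∃ p q : ℤ, x = (p : ℚ) ∧ s = (q : ℚ)) :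
    1 - ee ((s : ℂ) * (β : ℂ) - (x : ℂ)) ≠ 0 := by
  intro h
  have h1 : ee ((s : ℂ) * (β : ℂ) - (x : ℂ)) = 1 := (sub_eq_zero.mp h).symm
  rw [ee, Complex.exp_eq_one_iff] at h1
  obtain ⟨m, hm⟩ := h1
  have h2 : (s : ℂ) * (β : ℂ) - (x : ℂ) = m := by
    apply mul_left_cancel₀ Complex.two_pi_I_ne_zero
    rw [hm]
    ring
  have h3 : (s : ℝ) * β - x = m := by exact_mod_cast h2
  by_cases hs : s = 0
  · subst hs
    refine hr ⟨-m, 0, ?_, by simp⟩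
    have : (x : ℝ) = -m := by
      rw [← h3]
      simp
    exact_mod_cast this
  · have hirr := (hβ.ratCast_mul hs).sub_ratCast x
    rw [h3] at hirr
    exact m.not_irrational hirr

/-- The quotients `ϖ_r(σ)/ϖ_r(τ)` and `ϖ_{r+(0,1)}(σ)/ϖ_{r+(0,1)}(τ)` have the same limits along any
`σ, τ → β` in the upper half-plane. -/
lemma tendsto_shift_iff {β : ℝ} (hβ : Irrational β) {x s : ℚ}
    (hr : ¬ ∃ p q : ℤ, x = (p : ℚ) ∧ s = (q : ℚ)) {l : Filter ℝ} {σ τ : ℝ → ℂ}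
    (hσ : Tendsto σ l (nhds (β : ℂ))) (hτ : Tendsto τ l (nhds (β : ℂ)))
    (hσ' : ∀ᶠ y in l, 0 < (σ y).im) (hτ' : ∀ᶠ y in l, 0 < (τ y).im) (L : ℂ) :
    Tendsto (fun y => varpiChar (x, s) (σ y) / varpiChar (x, s) (τ y)) l (nhds L) ↔
      Tendsto (fun y => varpiChar (x, s + 1) (σ y) / varpiChar (x, s + 1) (τ y)) l (nhds L) := by
  have hne := one_sub_ee_ne_zero hβ hr
  have hcont : Continuous fun z : ℂ => 1 - ee ((s : ℂ) * z - (x : ℂ)) :=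
    continuous_const.sub (continuous_ee.comp (by fun_prop))
  have hfσ := (hcont.tendsto (β : ℂ)).comp hσ
  have hfτ := (hcont.tendsto (β : ℂ)).comp hτ
  have hneσ := hfσ.eventually_ne hne
  have hneτ := hfτ.eventually_ne hne
  have hq := hfσ.div hfτ hne
  have hq' := hfτ.div hfσ hne
  rw [div_self hne] at hq hq'
  constructor <;> intro h
  · have h' := hq'.mul h
    rw [one_mul] at h'
    refine h'.congr' ?_
    filter_upwards [hσ', hτ', hneσ, hneτ] with y h1 h2 h3 h4
    simp only [Function.comp_apply, Pi.div_apply] at h3 h4 ⊢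
    rw [varpiChar_eq_mul h1 x s, varpiChar_eq_mul h2 x s, mul_div_mul_comm, ← mul_assoc,
      div_mul_div_cancel₀ h3, div_self h4, one_mul]
  · have h' := hq.mul h
    rw [one_mul] at h'
    refine h'.congr' ?_
    filter_upwards [hσ', hτ'] with y h1 h2
    simp only [Function.comp_apply, Pi.div_apply]
    rw [varpiChar_eq_mul h1 x s, varpiChar_eq_mul h2 x s, mul_div_mul_comm]

lemma tendsto_shift_int_iff {β : ℝ} (hβ : Irrational β) {x s : ℚ}
    (hr : ¬ ∃ p q : ℤ, x = (p : ℚ) ∧ s = (q : ℚ)) {l : Filter ℝ} {σ τ : ℝ → ℂ}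
    (hσ : Tendsto σ l (nhds (β : ℂ))) (hτ : Tendsto τ l (nhds (β : ℂ)))
    (hσ' : ∀ᶠ y in l, 0 < (σ y).im) (hτ' : ∀ᶠ y in l, 0 < (τ y).im) (L : ℂ) (n : ℤ) :
    Tendsto (fun y => varpiChar (x, s) (σ y) / varpiChar (x, s) (τ y)) l (nhds L) ↔
      Tendsto (fun y => varpiChar (x, s + n) (σ y) / varpiChar (x, s + n) (τ y)) l (nhds L) := by
  have hr' (m : ℤ) : ¬ ∃ p q : ℤ, x = (p : ℚ) ∧ s + m = (q : ℚ) := by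
    rintro ⟨p, q, hp, hq⟩
    exact hr ⟨p, q - m, hp, by push_cast; linarith⟩
  have hstep (m : ℤ) := tendsto_shift_iff hβ (hr' m) hσ hτ hσ' hτ' L
  induction n using Int.induction_on with
  | zero => simp
  | succ k ih =>
    have h := hstep k
    rw [add_assoc] at h
    refine ih.trans ?_
    push_cast
    exact h
  | pred k ih =>
    have h := hstep (-k - 1)
    have e : s + ((-(k : ℤ) - 1 : ℤ) : ℚ) + 1 = s + ((-(k : ℤ) : ℤ) : ℚ) := by
      push_cast
      ring
    rw [e] at h
    exact ih.trans h.symm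

lemma im_moebius_pos {a b c d : ℤ} (hdet : a * d - b * c = 1) {z : ℂ} (hz : 0 < z.im) :
    0 < (((a : ℂ) * z + b) / ((c : ℂ) * z + d)).im := by
  let g : Matrix.SpecialLinearGroup (Fin 2) ℤ :=
    ⟨!![a, b; c, d], by rw [Matrix.det_fin_two_of]; exact hdet⟩
  have h := (g • (⟨z, hz⟩ : UpperHalfPlane)).im_pos
  rw [← UpperHalfPlane.coe_im, UpperHalfPlane.specialLinearGroup_apply] at h
  simpa [g] using h

/-- Invariance of the real multiplication value of the Shintani–Faddeev modular
cocycle under integer shifts of the characteristics, in the case `r ∉ ℤ²`. -/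
theorem rm_value_shift_invariance
    (r : ℚ × ℚ) (hr : ¬ ∃ p q : ℤ, r.1 = (p : ℚ) ∧ r.2 = (q : ℚ))
    (n : ℤ × ℤ) (a b c d : ℤ) (hA : inGamma r a b c d)
    (β : ℝ) (hirr : Irrational β)
    (hfix : ((a : ℝ) * β + (b : ℝ)) / ((c : ℝ) * β + (d : ℝ)) = β)
    (L : ℂ)
    (hL : Tendsto (fun y : ℝ =>
        varpiChar r (((a : ℂ) * ((β : ℂ) + (y : ℂ) * Complex.I) + (b : ℂ))
            / ((c : ℂ) * ((β : ℂ) + (y : ℂ) * Complex.I) + (d : ℂ)))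
          / varpiChar r ((β : ℂ) + (y : ℂ) * Complex.I))
        (nhdsWithin 0 (Set.Ioi 0)) (nhds L)) :
    Tendsto (fun y : ℝ =>
        varpiChar (r.1 + (n.1 : ℚ), r.2 + (n.2 : ℚ))
            (((a : ℂ) * ((β : ℂ) + (y : ℂ) * Complex.I) + (b : ℂ))
              / ((c : ℂ) * ((β : ℂ) + (y : ℂ) * Complex.I) + (d : ℂ)))
          / varpiChar (r.1 + (n.1 : ℚ), r.2 + (n.2 : ℚ)) ((β : ℂ) + (y : ℂ) * Complex.I))
      (nhdsWithin 0 (Set.Ioi 0)) (nhds L) := by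
  obtain ⟨hdet, -, -⟩ := hA
  -- `cβ + d = 0` would make `β` rational, or `c = d = 0`, which contradicts `det A = 1`.
  have hden : (c : ℝ) * β + d ≠ 0 := by
    intro h
    by_cases hc : c = 0
    · subst hc
      have hd : d = 0 := by simpa using h
      simp [hd] at hdet
    · have hirr' := (hirr.intCast_mul hc).add_intCast d
      rw [h] at hirr'
      simp at hirr'
  have hτ : Tendsto (fun y : ℝ => (β : ℂ) + (y : ℂ) * Complex.I)
      (nhdsWithin 0 (Set.Ioi 0)) (nhds (β : ℂ)) := by
    have hc : Continuous fun y : ℝ => (β : ℂ) + (y : ℂ) * Complex.I := by fun_prop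
    simpa using (hc.tendsto 0).mono_left nhdsWithin_le_nhds
  have hτ' : ∀ᶠ y : ℝ in nhdsWithin 0 (Set.Ioi 0), 0 < ((β : ℂ) + (y : ℂ) * Complex.I).im := by
    filter_upwards [self_mem_nhdsWithin] with y hy
    simpa using hy
  have hσ := ((hτ.const_mul (a : ℂ)).add_const (b : ℂ)).div
    ((hτ.const_mul (c : ℂ)).add_const (d : ℂ)) (by exact_mod_cast hden)
  have hfix' : ((a : ℂ) * β + b) / ((c : ℂ) * β + d) = β := by exact_mod_cast hfix
  rw [hfix'] at hσ
  have hσ' := hτ'.mono fun y hy => im_moebius_pos hdet hy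
  simp only [varpiChar_add_int_fst]
  exact (tendsto_shift_int_iff hirr hr hσ hτ hσ' hτ' L n.2).mp hL
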